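/- For every prime p and all nonnegative integers u, v, the number of subgroups of the additive group ℤ_{p^u} × ℤ_{p^v} equals ∑_{u₁=0}^{u} ∑_{u₂=0}^{v} p^{min(u₁,u₂)}, which equals ∑_{j=0}^{min(u,v)} (u+v+1−2j) p^j. -/

import Mathlib

/-- `numSubgroups m₁ m₂` is the number of subgroups of the additive group
`ℤ_{m₁} × ℤ_{m₂}`. -/
noncomputable def numSubgroups (m₁ m₂ : ℕ) : ℕ :=
  Nat.card (AddSubgroup (ZMod m₁ × ZMod m₂))

/-! A subgroup `K` of `A × B` (with `B` commutative) is the same thing as a triple consisting of its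
projection `C ≤ A`, its slice `D = {b | (0, b) ∈ K} ≤ B`, and the homomorphism `C → B ⧸ D` sending
`a` to the class of any `b` with `(a, b) ∈ K`. If `A` and `B` are finite cyclic, then `C` and `D`
correspond to divisors of `|A|` and `|B|`, and there are `gcd |C| |B ⧸ D|` homomorphisms between the
cyclic groups `C` and `B ⧸ D`; so `A × B` has `∑ gcd a b` subgroups, where `a ∣ |A|` and `b ∣ |B|`.
-/

open Finset

section Product

variable {A B : Type*} [AddGroup A] [AddCommGroup B]

/-- The subgroup `{(a, b) | a ∈ C, φ a = b + D}` of `A × B` attached to a homomorphism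
`φ : C →+ B ⧸ D`. Every subgroup of `A × B` arises in this way, by `addSubgroupProdEquiv`. -/
def quotientGraph {C : AddSubgroup A} {D : AddSubgroup B} (φ : C →+ B ⧸ D) :
    AddSubgroup (A × B) :=
  (φ.graph.comap ((AddMonoidHom.id C).prodMap (QuotientAddGroup.mk' D))).map
    (C.subtype.prodMap (AddMonoidHom.id B))

section QuotientGraph

variable {C : AddSubgroup A} {D : AddSubgroup B}

theorem mk_mem_quotientGraph {φ : C →+ B ⧸ D} {a : A} {b : B} :
    (a, b) ∈ quotientGraph φ ↔ ∃ ha : a ∈ C, φ ⟨a, ha⟩ = b := by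
  simp [quotientGraph, AddMonoidHom.mem_graph]

theorem map_fst_quotientGraph (φ : C →+ B ⧸ D) :
    (quotientGraph φ).map (AddMonoidHom.fst A B) = C := by
  ext a
  simp only [AddSubgroup.mem_map, Prod.exists, mk_mem_quotientGraph, AddMonoidHom.coe_fst,
    exists_and_right, exists_eq_right]
  constructor
  · rintro ⟨b, ha, -⟩
    exact ha
  · intro ha
    obtain ⟨b, hb⟩ := QuotientAddGroup.mk_surjective (φ ⟨a, ha⟩)
    exact ⟨b, ha, hb.symm⟩

theorem goursatSnd_quotientGraph (φ : C →+ B ⧸ D) : (quotientGraph φ).goursatSnd = D := by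
  ext b
  have hφ : φ ⟨0, C.zero_mem⟩ = 0 := map_zero φ
  simp [mk_mem_quotientGraph, hφ, eq_comm (a := (0 : B ⧸ D))]

theorem quotientGraph_injective :
    Function.Injective (quotientGraph : (C →+ B ⧸ D) → AddSubgroup (A × B)) := by
  intro φ ψ h
  ext ⟨a, ha⟩
  obtain ⟨b, hb⟩ := QuotientAddGroup.mk_surjective (φ ⟨a, ha⟩)
  have hmem : (a, b) ∈ quotientGraph ψ := h ▸ mk_mem_quotientGraph.2 ⟨ha, hb.symm⟩
  obtain ⟨_, hψ⟩ := mk_mem_quotientGraph.1 hmem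
  rw [← hb, hψ]

end QuotientGraph

theorem exists_quotientGraph_eq (K : AddSubgroup (A × B)) :
    ∃ φ : K.map (AddMonoidHom.fst A B) →+ B ⧸ K.goursatSnd, quotientGraph φ = K := by
  let π := (AddMonoidHom.fst A B).addSubgroupMap K
  have hπ : Function.Surjective π := (AddMonoidHom.fst A B).addSubgroupMap_surjective K
  let σ : K →+ B ⧸ K.goursatSnd :=
    (QuotientAddGroup.mk' K.goursatSnd).comp ((AddMonoidHom.snd A B).comp K.subtype)
  have hker : π.ker ≤ σ.ker := by
    rintro ⟨⟨a, b⟩, hab⟩ h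
    obtain rfl : a = 0 := congrArg Subtype.val h
    exact (QuotientAddGroup.eq_zero_iff b).2 (AddSubgroup.mem_goursatSnd.2 hab)
  let φ := π.liftOfSurjective hπ ⟨σ, hker⟩
  have hφ {a : A} {b : B} (hab : (a, b) ∈ K) (ha) : φ ⟨a, ha⟩ = b :=
    π.liftOfRightInverse_comp_apply _ (Function.rightInverse_surjInv hπ) ⟨σ, hker⟩ ⟨(a, b), hab⟩
  refine ⟨φ, ?_⟩
  ext ⟨a, b⟩
  rw [mk_mem_quotientGraph]
  constructor
  · rintro ⟨ha, hb⟩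
    obtain ⟨b', hab'⟩ : ∃ b', (a, b') ∈ K := by simpa using ha
    have hsub : (0, -b' + b) ∈ K := by
      rw [← AddSubgroup.mem_goursatSnd, ← QuotientAddGroup.eq, ← hφ hab' ha, hb]
    simpa using add_mem hab' hsub
  · exact fun hab ↦ ⟨⟨(a, b), hab, rfl⟩, hφ hab _⟩

/-- Goursat's description of the subgroups of a product `A × B` with `B` commutative: they
correspond to triples `(C, D, φ)` with `C ≤ A`, `D ≤ B` and `φ : C →+ B ⧸ D`. -/
noncomputable def addSubgroupProdEquiv :
    (Σ (C : AddSubgroup A) (D : AddSubgroup B), C →+ B ⧸ D) ≃ AddSubgroup (A × B) :=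
  Equiv.ofBijective (fun x ↦ quotientGraph x.2.2) <| by
    constructor
    · rintro ⟨C, D, φ⟩ ⟨C', D', ψ⟩ (h : quotientGraph φ = quotientGraph ψ)
      obtain rfl : C = C' := by rw [← map_fst_quotientGraph φ, h, map_fst_quotientGraph]
      obtain rfl : D = D' := by rw [← goursatSnd_quotientGraph φ, h, goursatSnd_quotientGraph]
      rw [quotientGraph_injective h]
    · intro K
      obtain ⟨φ, hφ⟩ := exists_quotientGraph_eq K
      exact ⟨⟨_, _, φ⟩, hφ⟩

theorem card_addSubgroup_prod [Finite A] [Finite B] [Fintype (AddSubgroup A)]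
    [Fintype (AddSubgroup B)] :
    Nat.card (AddSubgroup (A × B)) =
      ∑ C : AddSubgroup A, ∑ D : AddSubgroup B, Nat.card (C →+ B ⧸ D) := by
  have (C : AddSubgroup A) (D : AddSubgroup B) : Finite (C →+ B ⧸ D) := DFunLike.finite _
  simp only [← Nat.card_congr addSubgroupProdEquiv, Nat.card_sigma]

end Product

section Cyclic

/-- A homomorphism out of a cyclic group `A` is determined by the image of a generator, which may
be any element killed by `|A|`; for infinite `A` this is no condition, as `Nat.card A = 0`. -/
noncomputable def addMonoidHomEquivKerNsmul (A B : Type*) [AddGroup A] [IsAddCyclic A]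
    [AddCommGroup B] :
    (A →+ B) ≃ (nsmulAddMonoidHom (Nat.card A) : B →+ B).ker :=
  (zmodAddCyclicAddEquiv ‹IsAddCyclic A›).symm.addMonoidHomCongrLeftEquiv.trans <|
    (ZMod.lift (Nat.card A)).symm.trans <|
      ((zmultiplesHom B).subtypeEquiv fun b ↦ by simp [AddMonoidHom.mem_ker]).symm

theorem card_addMonoidHom (A B : Type*) [AddGroup A] [IsAddCyclic A] [AddCommGroup B]
    [IsAddCyclic B] [Finite B] :
    Nat.card (A →+ B) = (Nat.card A).gcd (Nat.card B) := by
  rw [Nat.card_congr (addMonoidHomEquivKerNsmul A B), IsAddCyclic.card_nsmulAddMonoidHom_ker,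
    Nat.gcd_comm]

variable {A : Type*} [AddCommGroup A] [IsAddCyclic A] [Finite A]

theorem ker_nsmulAddMonoidHom_card (H : AddSubgroup A) :
    (nsmulAddMonoidHom (Nat.card H) : A →+ A).ker = H := by
  refine (AddSubgroup.eq_of_le_of_card_ge (fun a ha ↦ ?_) ?_).symm
  · exact congrArg Subtype.val (card_nsmul_eq_zero' (x := (⟨a, ha⟩ : H)))
  · rw [IsAddCyclic.card_nsmulAddMonoidHom_ker]
    exact Nat.gcd_le_right _ Nat.card_pos

theorem sum_addSubgroup_card [Fintype (AddSubgroup A)] {M : Type*} [AddCommMonoid M] (f : ℕ → M) :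
    ∑ H : AddSubgroup A, f (Nat.card H) = ∑ d ∈ (Nat.card A).divisors, f d := by
  refine sum_nbij' (fun H ↦ Nat.card H) (fun d ↦ (nsmulAddMonoidHom d : A →+ A).ker)
    (fun H _ ↦ ?_) (fun _ _ ↦ mem_univ _) (fun H _ ↦ ker_nsmulAddMonoidHom_card H)
    (fun d hd ↦ ?_) (fun _ _ ↦ rfl)
  · exact Nat.mem_divisors.2 ⟨H.card_addSubgroup_dvd_card, Nat.card_pos.ne'⟩
  · rw [IsAddCyclic.card_nsmulAddMonoidHom_ker, Nat.gcd_eq_right (Nat.dvd_of_mem_divisors hd)]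

theorem sum_addSubgroup_index [Fintype (AddSubgroup A)] {M : Type*} [AddCommMonoid M]
    (f : ℕ → M) :
    ∑ H : AddSubgroup A, f H.index = ∑ d ∈ (Nat.card A).divisors, f d := by
  have hindex (H : AddSubgroup A) : H.index = Nat.card A / Nat.card H :=
    Nat.eq_div_of_mul_eq_right Nat.card_pos.ne' H.card_mul_index
  simp only [hindex]
  rw [sum_addSubgroup_card fun d ↦ f (Nat.card A / d), Nat.sum_div_divisors]

end Cyclic

theorem sum_divisors_gcd_prime_pow {p : ℕ} (hp : p.Prime) (u v : ℕ) :
    ∑ a ∈ (p ^ u).divisors, ∑ b ∈ (p ^ v).divisors, a.gcd b =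
      ∑ i ∈ range (u + 1), ∑ j ∈ range (v + 1), p ^ min i j := by
  have hgcd (i j : ℕ) : (p ^ i).gcd (p ^ j) = p ^ min i j := by
    rcases le_total i j with h | h
    · rw [min_eq_left h, Nat.gcd_eq_left (pow_dvd_pow p h)]
    · rw [min_eq_right h, Nat.gcd_eq_right (pow_dvd_pow p h)]
  simp only [Nat.sum_divisors_prime_pow hp, hgcd]

theorem sum_range_sum_range_min {M : Type*} [AddCommMonoid M] (f : ℕ → M) (u v : ℕ) :
    ∑ i ∈ range (u + 1), ∑ j ∈ range (v + 1), f (min i j) =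
      ∑ k ∈ range (min u v + 1), (u + v + 1 - 2 * k) • f k := by
  induction u generalizing v f with
  | zero => simp
  | succ u ih =>
    cases v with
    | zero => simp
    | succ v =>
      have hsub (k : ℕ) : u + 1 + (v + 1) + 1 - 2 * (k + 1) = u + v + 1 - 2 * k := by lia
      -- Split off the row `i = 0` and the column `j = 0`, on which `min i j = 0`.
      calc ∑ i ∈ range (u + 2), ∑ j ∈ range (v + 2), f (min i j)
          = ∑ i ∈ range (u + 1), ∑ j ∈ range (v + 1), f (min i j + 1) + (u + v + 3) • f 0 := by
            simp only [sum_range_succ' _ (u + 1), sum_range_succ' _ (v + 1), sum_add_distrib,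
              Nat.add_min_add_right, Nat.zero_min, Nat.min_zero, sum_const, card_range]
            module
        _ = ∑ k ∈ range (min u v + 1), (u + v + 1 - 2 * k) • f (k + 1) + (u + v + 3) • f 0 := by
            rw [ih (f <| · + 1)]
        _ = ∑ k ∈ range (min (u + 1) (v + 1) + 1), (u + 1 + (v + 1) + 1 - 2 * k) • f k := by
            rw [Nat.add_min_add_right, sum_range_succ' _ (min u v + 1)]
            simp only [hsub]
            congr 2
            lia

theorem stmt10_general (A B : Type*) [AddCommGroup A] [IsAddCyclic A] [Finite A]
    [AddCommGroup B] [IsAddCyclic B] [Finite B] :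
    Nat.card (AddSubgroup (A × B)) =
      ∑ a ∈ (Nat.card A).divisors, ∑ b ∈ (Nat.card B).divisors, a.gcd b := by
  have := Fintype.ofFinite (AddSubgroup A)
  have := Fintype.ofFinite (AddSubgroup B)
  have (D : AddSubgroup B) : IsAddCyclic (B ⧸ D) :=
    isAddCyclic_of_surjective _ (QuotientAddGroup.mk'_surjective D)
  calc Nat.card (AddSubgroup (A × B))
      = ∑ C : AddSubgroup A, ∑ D : AddSubgroup B, (Nat.card C).gcd D.index := by
        simp only [card_addSubgroup_prod, card_addMonoidHom, AddSubgroup.index_eq_card]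
    _ = ∑ C : AddSubgroup A, ∑ b ∈ (Nat.card B).divisors, (Nat.card C).gcd b := by
        simp only [sum_addSubgroup_index]
    _ = ∑ a ∈ (Nat.card A).divisors, ∑ b ∈ (Nat.card B).divisors, a.gcd b :=
        sum_addSubgroup_card fun a ↦ ∑ b ∈ (Nat.card B).divisors, a.gcd b

theorem stmt10 (p : ℕ) (hp : p.Prime) (u v : ℕ) :
    (numSubgroups (p ^ u) (p ^ v) =
        ∑ u₁ ∈ Finset.range (u + 1), ∑ u₂ ∈ Finset.range (v + 1), p ^ min u₁ u₂) ∧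
    (numSubgroups (p ^ u) (p ^ v) =
        ∑ j ∈ Finset.range (min u v + 1), (u + v + 1 - 2 * j) * p ^ j) := by
  have : NeZero p := ⟨hp.ne_zero⟩
  have hsum : numSubgroups (p ^ u) (p ^ v) =
      ∑ i ∈ range (u + 1), ∑ j ∈ range (v + 1), p ^ min i j := by
    rw [numSubgroups, stmt10_general, Nat.card_zmod, Nat.card_zmod, sum_divisors_gcd_prime_pow hp]
  exact ⟨hsum, hsum.trans (sum_range_sum_range_min (p ^ ·) u v)⟩
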